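/- Let k ≥ 4 be an integer, let ω > 1 be real, and let t be a real number with t ≥ ⌊k/2⌋. Then there is a constant C = C(k, ω, t) > 0 such that for every P ≥ 2 and every subset 𝒜 of the integers in [1,P], one has ∫_𝔎 Υ_ω(α) |Σ_{x ∈ 𝒜} e(αx^k)|^{2t} dα ≤ C·P^{2t−k}. -/

import Mathlib

open MeasureTheory
open scoped Classical

/-- `e(α) = exp(2πiα)`. -/
noncomputable def eC (α : ℝ) : ℂ := Complex.exp (2 * Real.pi * Complex.I * α)

/-- The value of the multiplicative function `w_k` at the prime power `p^e` (`e ≥ 1`):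
writing `e = uk + v` with `u ≥ 0` and `1 ≤ v ≤ k`, one has `w_k(p^{uk+1}) = k p^{−u−1/2}`
and `w_k(p^{uk+v}) = p^{−u−1}` for `2 ≤ v ≤ k`. -/
noncomputable def wkLocal (k p e : ℕ) : ℝ :=
  if (e - 1) % k = 0 then (k : ℝ) * (p : ℝ) ^ (-(((e - 1) / k : ℕ) : ℝ) - 1 / 2)
  else (p : ℝ) ^ (-(((e - 1) / k : ℕ) : ℝ) - 1)

/-- The multiplicative function `w_k`. -/
noncomputable def wk (k q : ℕ) : ℝ :=
  ∏ p ∈ q.primeFactors, wkLocal k p (q.factorization p)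

/-- The union `𝔎` of the arcs `𝔎(q,a) = {α ∈ [0,1) : |qα − a| ≤ P^{1−k}}` over coprime
`a, q` with `0 ≤ a ≤ q ≤ P`. -/
def Kset (k : ℕ) (P : ℝ) : Set ℝ :=
  {α ∈ Set.Ico (0 : ℝ) 1 | ∃ a q : ℕ, a ≤ q ∧ (q : ℝ) ≤ P ∧ Nat.Coprime a q ∧
    |(q : ℝ) * α - (a : ℝ)| ≤ P ^ ((1 : ℝ) - (k : ℝ))}


lemma torsion_card {G : Type*} [CommGroup G] [Fintype G] (g : G)
    (hg : Fintype.card G ≤ 2 * orderOf g) (k : ℕ) (hk : 0 < k) :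
    (Finset.univ.filter (fun u : G => u ^ k = 1)).card ≤ 2 * k := by
  set H := Subgroup.zpowers g with hH
  have hq : Fintype.card (G ⧸ H) ≤ 2 := by
    have h1 := H.card_mul_index
    rw [Nat.card_zpowers, Nat.card_eq_fintype_card (α := G)] at h1
    have h2 : 0 < orderOf g := orderOf_pos g
    have h3 : H.index = Fintype.card (G ⧸ H) := by
      rw [Subgroup.index, Nat.card_eq_fintype_card]
    rw [← h3]
    nlinarith
  have hc : (Finset.univ.filter (fun v : H => v ^ k = 1)).card ≤ k := by
    have := IsCyclic.card_pow_eq_one_le (α := H) hk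
    convert this
  have := Finset.card_le_mul_card_image_of_maps_to
    (s := (Finset.univ : Finset G).filter (fun u : G => u ^ k = 1)) (t := (Finset.univ : Finset (G ⧸ H)))
    (f := fun u : G => (u : G ⧸ H)) (fun _ _ => Finset.mem_univ _) k ?_
  · refine this.trans ?_
    rw [Finset.card_univ, mul_comm]
    gcongr
  · intro b _
    by_cases hne : (((Finset.univ : Finset G).filter (fun u : G => u ^ k = 1)).filter
        (fun u : G => (u : G ⧸ H) = b)).Nonempty
    · obtain ⟨u0, hu0⟩ := hne
      simp only [Finset.mem_filter, Finset.mem_univ, true_and] at hu0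
      refine le_trans ?_ hc
      refine Finset.card_le_card_of_injOn
        (fun u : G => if h : u0⁻¹ * u ∈ H then ⟨u0⁻¹ * u, h⟩ else 1) ?_ ?_
      · intro u hu
        simp only [Finset.coe_filter, Finset.mem_filter, Finset.mem_univ, true_and,
          Set.mem_ofPred_eq] at hu ⊢
        have hm : u0⁻¹ * u ∈ H := by
          rw [← QuotientGroup.eq]; exact hu0.2.trans hu.2.symm
        rw [dif_pos hm]
        ext
        simp [mul_pow, hu.1, hu0.1]
      · intro u hu v hv huv
        simp only [Finset.coe_filter, Finset.mem_filter, Finset.mem_univ, true_and,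
          Set.mem_ofPred_eq] at hu hv
        have hm : u0⁻¹ * u ∈ H := by
          rw [← QuotientGroup.eq]; exact hu0.2.trans hu.2.symm
        have hm' : u0⁻¹ * v ∈ H := by
          rw [← QuotientGroup.eq]; exact hu0.2.trans hv.2.symm
        simp only [dif_pos hm, dif_pos hm'] at huv
        simpa using huv
    · rw [Finset.not_nonempty_iff_eq_empty.mp hne]; simp

lemma torsion_zmod (p h : ℕ) (hp : p.Prime) [NeZero (p ^ h)] (k : ℕ) (hk : 0 < k) :
    (Finset.univ.filter (fun u : (ZMod (p ^ h))ˣ => u ^ k = 1)).card ≤ 2 * k := by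
  have cyc : IsCyclic (ZMod (p ^ h))ˣ → (Finset.univ.filter
      (fun u : (ZMod (p ^ h))ˣ => u ^ k = 1)).card ≤ 2 * k := by
    intro hc
    have := IsCyclic.card_pow_eq_one_le (α := (ZMod (p ^ h))ˣ) hk
    have h2 : (Finset.univ.filter
      (fun u : (ZMod (p ^ h))ˣ => u ^ k = 1)).card ≤ k := by convert this
    omega
  by_cases h2 : p = 2
  · subst h2
    rcases le_or_gt h 2 with hh | hh
    · exact cyc ((ZMod.isCyclic_units_two_pow_iff h).2 hh)
    · obtain ⟨n, rfl⟩ : ∃ n, h = n + 2 := ⟨h - 2, by omega⟩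
      have h5 := ZMod.orderOf_five n
      have hu : IsUnit (5 : ZMod (2 ^ (n + 2))) := by
        have := (ZMod.isUnit_iff_coprime 5 (2 ^ (n+2))).2 (Nat.Coprime.pow_right _ (by norm_num))
        exact_mod_cast this
      obtain ⟨g, hg⟩ := hu
      have := torsion_card g ?_ k hk
      · convert this
      rw [← orderOf_units, hg, h5, ZMod.card_units_eq_totient,
        Nat.totient_prime_pow Nat.prime_two (by omega)]
      simp [pow_succ]; omega
  · exact cyc (ZMod.isCyclic_units_of_prime_pow p hp h2 h)

lemma roots_card (p h : ℕ) (hp : p.Prime) (hh : 0 < h) (k : ℕ) (hk : 0 < k) (e c : ℤ)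
    (he : e = 1 ∨ e = -1) :
    ((Finset.range (p ^ h)).filter
      (fun z : ℕ => ¬ p ∣ z ∧ ((p ^ h : ℕ) : ℤ) ∣ e * (z : ℤ) ^ k + c)).card ≤ 2 * k := by
  have : NeZero (p ^ h) := ⟨pow_ne_zero _ hp.ne_zero⟩
  by_cases hne : ((Finset.range (p ^ h)).filter
      (fun z : ℕ => ¬ p ∣ z ∧ ((p ^ h : ℕ) : ℤ) ∣ e * (z : ℤ) ^ k + c)).Nonempty
  · obtain ⟨z0, hz0⟩ := hne
    simp only [Finset.mem_filter, Finset.mem_range] at hz0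
    have hcop : ∀ z : ℕ, ¬ p ∣ z → Nat.Coprime z (p ^ h) := fun z hz =>
      Nat.Coprime.pow_right _ ((Nat.Prime.coprime_iff_not_dvd hp).2 hz).symm
    refine le_trans ?_ (torsion_zmod p h hp k hk)
    have key : ∀ z : ℕ, ((p ^ h : ℕ) : ℤ) ∣ e * (z : ℤ) ^ k + c →
        ((z : ZMod (p ^ h))) ^ k = ((z0 : ZMod (p ^ h))) ^ k := by
      intro z hz
      have h1 : ((p ^ h : ℕ) : ℤ) ∣ (z : ℤ) ^ k - (z0 : ℤ) ^ k := by
        have h2 := dvd_sub hz hz0.2.2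
        rcases he with rfl | rfl
        · simpa using h2
        · rw [← dvd_neg]; convert h2 using 1; ring
      have h3 := (ZMod.intCast_zmod_eq_zero_iff_dvd _ _).2 h1
      push_cast at h3
      exact sub_eq_zero.1 h3
    refine Finset.card_le_card_of_injOn
        (fun z => if hz : ¬ p ∣ z then ZMod.unitOfCoprime z (hcop z hz) *
          (ZMod.unitOfCoprime z0 (hcop z0 hz0.2.1))⁻¹ else 1) ?_ ?_
    · intro z hz
      simp only [Finset.coe_filter, Finset.mem_range, Finset.mem_filter, Finset.mem_univ, true_and,
          Set.mem_ofPred_eq] at hz ⊢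
      rw [dif_pos hz.2.1, mul_pow, inv_pow, mul_inv_eq_one]
      ext
      simpa using key z hz.2.2
    · intro z hz y hy hzy
      simp only [Finset.coe_filter, Finset.mem_range, 
          Set.mem_ofPred_eq] at hz hy
      simp only [dif_pos hz.2.1, dif_pos hy.2.1, mul_left_inj] at hzy
      have h4 := congrArg (fun u : (ZMod (p ^ h))ˣ => (u : ZMod (p ^ h))) hzy
      simp only [ZMod.coe_unitOfCoprime] at h4
      rw [ZMod.natCast_eq_natCast_iff'] at h4
      rwa [Nat.mod_eq_of_lt hz.1, Nat.mod_eq_of_lt hy.1] at h4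
  · rw [Finset.not_nonempty_iff_eq_empty.mp hne]; simp

/-- number of solutions in a box -/
noncomputable def Cnt {ι : Type} [Fintype ι] (ε : ι → ℤ) (k N q : ℕ) : ℕ :=
  ((Fintype.piFinset (fun _ : ι => Finset.range N)).filter
    (fun x => (q : ℤ) ∣ ∑ i, ε i * (x i : ℤ) ^ k)).card

lemma dvd_mod_iff {ι : Type} [Fintype ι] (ε : ι → ℤ) (k q d : ℕ) (hd : d ∣ q) (x : ι → ℕ) :
    ((d : ℤ) ∣ ∑ i, ε i * ((x i % q : ℕ) : ℤ) ^ k) ↔ (d : ℤ) ∣ ∑ i, ε i * (x i : ℤ) ^ k := by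
  rw [← ZMod.intCast_zmod_eq_zero_iff_dvd, ← ZMod.intCast_zmod_eq_zero_iff_dvd]
  push_cast
  have : ∀ i, (((x i : ℤ) % (q : ℤ) : ℤ) : ZMod d) = (x i : ZMod d) := by
    intro i
    have h1 : ((x i % q : ℕ) : ZMod d) = (x i : ZMod d) := by
      rw [ZMod.natCast_eq_natCast_iff]
      exact (Nat.mod_modEq _ _).of_dvd hd
    rw [← h1]; push_cast; norm_cast
  have h2 : ∀ i, ((x i % q : ℕ) : ZMod d) = (x i : ZMod d) := by
    intro i
    rw [ZMod.natCast_eq_natCast_iff]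
    exact (Nat.mod_modEq _ _).of_dvd hd
  simp only [this]

lemma cnt_mul {ι : Type} [Fintype ι] (ε : ι → ℤ) (k m q : ℕ) (hq : 0 < q) :
    Cnt ε k (m * q) q ≤ m ^ Fintype.card ι * Cnt ε k q q := by
  unfold Cnt
  have h1 : m ^ Fintype.card ι =
    (Fintype.piFinset (fun _ : ι => Finset.range m)).card := by
      simp [Fintype.card_piFinset]
  rw [h1, ← Finset.card_product]
  refine Finset.card_le_card_of_injOn (fun x => (fun i => x i / q, fun i => x i % q)) ?_ ?_
  · intro x hx
    simp only [Finset.coe_filter, Fintype.mem_piFinset, Finset.mem_range, Set.mem_ofPred_eq,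
      Finset.coe_product, Set.mem_prod, Finset.mem_coe] at hx ⊢
    refine ⟨fun i => Nat.div_lt_of_lt_mul (by rw [mul_comm]; exact hx.1 i), fun i => Nat.mod_lt _ hq, ?_⟩
    exact (dvd_mod_iff ε k q q dvd_rfl x).2 hx.2
  · intro x _ y _ hxy
    simp only [Prod.mk.injEq] at hxy
    funext i
    rw [← Nat.div_add_mod (x i) q, ← Nat.div_add_mod (y i) q, congrFun hxy.1 i, congrFun hxy.2 i]

lemma cnt_coprime {ι : Type} [Fintype ι] (ε : ι → ℤ) (k q r : ℕ) (hq : 0 < q) (hr : 0 < r)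
    (hc : Nat.Coprime q r) :
    Cnt ε k (q * r) (q * r) ≤ Cnt ε k q q * Cnt ε k r r := by
  unfold Cnt
  rw [← Finset.card_product]
  refine Finset.card_le_card_of_injOn (fun x => (fun i => x i % q, fun i => x i % r)) ?_ ?_
  · intro x hx
    simp only [Finset.coe_filter, Fintype.mem_piFinset, Finset.mem_range, Set.mem_ofPred_eq,
      Finset.coe_product, Set.mem_prod, Finset.mem_coe] at hx ⊢
    have h2 := hx.2
    push_cast at h2
    exact ⟨⟨fun i => Nat.mod_lt _ hq, 
      (dvd_mod_iff ε k q q dvd_rfl x).2 ((dvd_mul_right _ _).trans h2)⟩,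
      fun i => Nat.mod_lt _ hr, (dvd_mod_iff ε k r r dvd_rfl x).2 ((dvd_mul_left _ _).trans h2)⟩
  · intro x hx y hy hxy
    simp only [Prod.mk.injEq] at hxy
    simp only [Finset.coe_filter, Fintype.mem_piFinset, Finset.mem_range, Set.mem_ofPred_eq] at hx hy
    funext i
    have h1 : x i ≡ y i [MOD q * r] :=
      (Nat.modEq_and_modEq_iff_modEq_mul hc).1 ⟨congrFun hxy.1 i, congrFun hxy.2 i⟩
    have := h1
    unfold Nat.ModEq at this
    rwa [Nat.mod_eq_of_lt (hx.1 i), Nat.mod_eq_of_lt (hy.1 i)] at this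

lemma cnt_nonsing {ι : Type} [Fintype ι] (ε : ι → ℤ) (hε : ∀ i, ε i = 1 ∨ ε i = -1)
    (k p h : ℕ) (hk : 0 < k) (hp : p.Prime) (hh : 0 < h) (i : ι) :
    ((Fintype.piFinset (fun _ : ι => Finset.range (p ^ h))).filter
    (fun x => ((p ^ h : ℕ) : ℤ) ∣ ∑ i, ε i * (x i : ℤ) ^ k ∧ ¬ p ∣ x i)).card
      ≤ 2 * k * (p ^ h) ^ (Fintype.card ι - 1) := by
  set T : Finset (ι → ℕ) := Fintype.piFinset
    (fun j : ι => if j = i then {0} else Finset.range (p ^ h)) with hT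
  have hTc : T.card = (p ^ h) ^ (Fintype.card ι - 1) := by
    rw [hT, Fintype.card_piFinset, ← Finset.mul_prod_erase Finset.univ _ (Finset.mem_univ i)]
    rw [Finset.prod_congr rfl (g := fun _ => p ^ h)]
    · simp
    · intro j hj
      rw [if_neg (Finset.ne_of_mem_erase hj)]; simp
  rw [← hTc]
  refine Finset.card_le_mul_card_image_of_maps_to (f := fun x => Function.update x i 0) ?_ _ ?_
  · intro x hx
    simp only [Finset.mem_filter, Fintype.mem_piFinset, Finset.mem_range] at hx
    rw [hT, Fintype.mem_piFinset]
    intro j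
    by_cases hj : j = i
    · subst hj; simp
    · simp [hj, hx.1 j]
  · intro y _
    refine le_trans ?_ (roots_card p h hp hh k hk (ε i)
      (∑ j ∈ Finset.univ.erase i, ε j * (y j : ℤ) ^ k) (hε i))
    refine Finset.card_le_card_of_injOn (fun x => x i) ?_ ?_
    · intro x hx
      simp only [Finset.coe_filter, Finset.mem_filter, Fintype.mem_piFinset, Finset.mem_range,
        Set.mem_ofPred_eq] at hx ⊢
      obtain ⟨⟨h1, h2, h3⟩, h4⟩ := hx
      refine ⟨h1 i, h3, ?_⟩
      rw [← Finset.add_sum_erase Finset.univ _ (Finset.mem_univ i)] at h2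
      convert h2 using 2
      refine Finset.sum_congr rfl fun j hj => ?_
      rw [← h4, Function.update_of_ne (Finset.ne_of_mem_erase hj)]
    · intro x hx z hz hxz
      simp only [Finset.coe_filter, Finset.mem_filter, 
        Set.mem_ofPred_eq] at hx hz
      funext j
      by_cases hj : j = i
      · subst hj; exact hxz
      · have := congrFun (hx.2.trans hz.2.symm) j
        simpa [Function.update_of_ne hj] using this

lemma cnt_split {ι : Type} [Fintype ι] (ε : ι → ℤ) (hε : ∀ i, ε i = 1 ∨ ε i = -1)
    (k p h : ℕ) (hk : 0 < k) (hp : p.Prime) (hh : 0 < h) :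
    Cnt ε k (p ^ h) (p ^ h) ≤ Fintype.card ι * (2 * k * (p ^ h) ^ (Fintype.card ι - 1)) +
    ((Fintype.piFinset (fun _ : ι => Finset.range (p ^ h))).filter
    (fun x => ((p ^ h : ℕ) : ℤ) ∣ ∑ i, ε i * (x i : ℤ) ^ k ∧ ∀ i, p ∣ x i)).card := by
  have h1 : Fintype.card ι * (2 * k * (p ^ h) ^ (Fintype.card ι - 1)) ≥ 
     (Finset.univ.biUnion fun i : ι => ((Fintype.piFinset (fun _ : ι => Finset.range (p ^ h))).filter
    (fun x => ((p ^ h : ℕ) : ℤ) ∣ ∑ i, ε i * (x i : ℤ) ^ k ∧ ¬ p ∣ x i))).card := by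
    have := Finset.card_biUnion_le_card_mul Finset.univ (fun i : ι => 
      ((Fintype.piFinset (fun _ : ι => Finset.range (p ^ h))).filter
    (fun x => ((p ^ h : ℕ) : ℤ) ∣ ∑ i, ε i * (x i : ℤ) ^ k ∧ ¬ p ∣ x i)))  
      (2 * k * (p ^ h) ^ (Fintype.card ι - 1)) 
      (fun i _ => cnt_nonsing ε hε k p h hk hp hh i)
    simpa using this
  refine le_trans ?_ (Nat.add_le_add_right h1 _)
  refine le_trans (Finset.card_le_card ?_) (Finset.card_union_le _ _)
  intro x hx
  simp only [Finset.mem_filter, Finset.mem_union, Finset.mem_biUnion, Finset.mem_univ, true_and] at hx ⊢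
  by_cases hd : ∀ i, p ∣ x i
  · exact Or.inr ⟨hx.1, hx.2, hd⟩
  · push Not at hd
    obtain ⟨i, hi⟩ := hd
    exact Or.inl ⟨i, hx.1, hx.2, hi⟩

lemma cnt_sing_small {ι : Type} [Fintype ι] (ε : ι → ℤ) 
    (k p h : ℕ) (hp : p.Prime) (hh : 0 < h) :
    ((Fintype.piFinset (fun _ : ι => Finset.range (p ^ h))).filter
    (fun x => ((p ^ h : ℕ) : ℤ) ∣ ∑ i, ε i * (x i : ℤ) ^ k ∧ ∀ i, p ∣ x i)).card
     ≤ (p ^ (h - 1)) ^ Fintype.card ι := by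
  have h1 : (p ^ (h - 1)) ^ Fintype.card ι =
    (Fintype.piFinset (fun _ : ι => Finset.range (p ^ (h - 1)))).card := by
      simp [Fintype.card_piFinset]
  obtain ⟨n, rfl⟩ : ∃ n, h = n + 1 := ⟨h - 1, by omega⟩
  rw [h1]
  refine Finset.card_le_card_of_injOn (fun x i => x i / p) ?_ ?_
  · intro x hx
    simp only [Finset.coe_filter, Fintype.mem_piFinset, Finset.mem_range, Set.mem_ofPred_eq,
      Finset.mem_coe] at hx ⊢
    intro i
    apply Nat.div_lt_of_lt_mul
    have := hx.1 i
    rw [pow_succ'] at this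
    simpa using this
  · intro x hx y hy hxy
    simp only [Finset.coe_filter, Set.mem_ofPred_eq] at hx hy
    funext i
    have h9 : x i / p = y i / p := congrFun hxy i
    rw [← Nat.div_mul_cancel (hx.2.2 i), ← Nat.div_mul_cancel (hy.2.2 i), h9]

lemma cnt_sing_large {ι : Type} [Fintype ι] (ε : ι → ℤ) 
    (k p h : ℕ) (hp : p.Prime) (hk : 0 < k) (hh : k < h) :
    ((Fintype.piFinset (fun _ : ι => Finset.range (p ^ h))).filter
    (fun x => ((p ^ h : ℕ) : ℤ) ∣ ∑ i, ε i * (x i : ℤ) ^ k ∧ ∀ i, p ∣ x i)).card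
     ≤ (p ^ (k - 1)) ^ Fintype.card ι * Cnt ε k (p ^ (h - k)) (p ^ (h - k)) := by
  refine le_trans ?_ (cnt_mul ε k (p ^ (k - 1)) (p ^ (h - k)) (pow_pos hp.pos _))
  rw [← pow_add]
  obtain ⟨n, rfl⟩ : ∃ n, h = n + 1 := ⟨h - 1, by omega⟩
  have e1 : k - 1 + (n + 1 - k) = n := by omega
  rw [e1]
  unfold Cnt
  refine Finset.card_le_card_of_injOn (fun x i => x i / p) ?_ ?_
  · intro x hx
    simp only [Finset.coe_filter, Fintype.mem_piFinset, Finset.mem_range, Set.mem_ofPred_eq] at hx ⊢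
    refine ⟨?_, ?_⟩
    · intro i
      apply Nat.div_lt_of_lt_mul
      have := hx.1 i
      rw [pow_succ'] at this
      simpa using this
    · have h2 : ∑ i, ε i * (x i : ℤ) ^ k = (p : ℤ) ^ k * ∑ i, ε i * ((x i / p : ℕ) : ℤ) ^ k := by
        rw [Finset.mul_sum]
        refine Finset.sum_congr rfl fun i _ => ?_
        have h3 : (x i : ℤ) = (p : ℤ) * ((x i / p : ℕ) : ℤ) := by
          have := Nat.mul_div_cancel' (hx.2.2 i)
          exact_mod_cast this.symm
        conv_lhs => rw [h3]
        ring
      have h4 := hx.2.1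
      rw [h2] at h4
      have h5 : ((p ^ (n + 1) : ℕ) : ℤ) = (p : ℤ) ^ k * ((p ^ (n + 1 - k) : ℕ) : ℤ) := by
        push_cast
        rw [← pow_add]; congr 1; omega
      rw [h5] at h4
      exact Int.dvd_of_mul_dvd_mul_left (pow_ne_zero _ (by exact_mod_cast hp.ne_zero)) h4
  · intro x hx y hy hxy
    simp only [Finset.coe_filter, Set.mem_ofPred_eq] at hx hy
    funext i
    have h9 : x i / p = y i / p := congrFun hxy i
    rw [← Nat.div_mul_cancel (hx.2.2 i), ← Nat.div_mul_cancel (hy.2.2 i), h9]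

/-- exponent -/
def gExp (k h : ℕ) : ℕ := if (h - 1) % k = 0 then (h - 1) / k else (h - 1) / k + 1

lemma gExp_step (k h : ℕ) (hk : 0 < k) (hh : k < h) : gExp k h = gExp k (h - k) + 1 := by
  unfold gExp
  have e : h - 1 = (h - k - 1) + k := by omega
  rw [e, Nat.add_mod_right, Nat.add_div_right _ hk]
  split_ifs <;> rfl

lemma cnt_prime_pow {ι : Type} [Fintype ι] (ε : ι → ℤ) (hε : ∀ i, ε i = 1 ∨ ε i = -1)
    (k p : ℕ) (hk : 4 ≤ k) (hn : k ≤ Fintype.card ι + 1) (hp : p.Prime) (h : ℕ) (hh : 0 < h) :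
    Cnt ε k (p ^ h) (p ^ h) + (2 * k * Fintype.card ι) * (p ^ h) ^ (Fintype.card ι - 1) ≤
      (2 * (2 * k * Fintype.card ι) + 1) * p ^ gExp k h * (p ^ h) ^ (Fintype.card ι - 1) := by
  induction h using Nat.strong_induction_on with
  | _ h ih =>
  obtain ⟨n, hn'⟩ : ∃ n, Fintype.card ι = n + 1 := ⟨Fintype.card ι - 1, by omega⟩
  have hs := cnt_split ε hε k p h (by omega) hp hh
  have hs2 := cnt_sing_small ε k p h hp hh
  rw [hn'] at hs hs2 ih ⊢
  simp only [Nat.add_sub_cancel] at hs hs2 ih ⊢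
  have hX : 1 ≤ p ^ gExp k h := Nat.one_le_pow _ _ hp.pos
  set A := 2 * k * (n + 1) with hA
  set Y := (p ^ h) ^ n with hY
  rcases le_or_gt h k with hhk | hhk
  · have h1 : (p ^ (h - 1)) ^ (n + 1) ≤ p ^ gExp k h * Y := by
      rw [hY, ← pow_mul, ← pow_mul, ← pow_add]
      apply Nat.pow_le_pow_right hp.pos
      have : h - 1 ≤ n + gExp k h := by
        unfold gExp
        rcases Nat.lt_or_ge 1 h with h1 | h1
        · rw [if_neg]
          · have := Nat.zero_le ((h - 1) / k)
            generalize (h - 1) / k = m at *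
            omega
          · rw [Nat.mod_eq_of_lt (by omega)]; omega
        · omega
      obtain ⟨l, rfl⟩ : ∃ l, h = l + 1 := ⟨h - 1, by omega⟩
      simp only [Nat.add_sub_cancel] at this ⊢
      nlinarith
    have : Y ≤ p ^ gExp k h * Y := Nat.le_mul_of_pos_left _ (by omega)
    nlinarith
  · have hl := cnt_sing_large ε k p h hp (by omega) hhk
    rw [hn'] at hl
    have ih' := ih (h - k) (by omega) (by omega)
    have h1 : (p ^ (k - 1)) ^ (n + 1) ≤ p * (p ^ k) ^ n := by
      rw [← pow_mul, ← pow_mul, ← pow_succ']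
      apply Nat.pow_le_pow_right hp.pos
      obtain ⟨l, rfl⟩ : ∃ l, k = l + 1 := ⟨k - 1, by omega⟩
      simp only [Nat.add_sub_cancel]
      nlinarith
    have hYY : Y = (p ^ k) ^ n * (p ^ (h - k)) ^ n := by
      rw [hY, ← mul_pow, ← pow_add]; congr 3; omega
    have hg := gExp_step k h (by omega) hhk
    rw [hg, pow_succ']
    set C := Cnt ε k (p ^ (h - k)) (p ^ (h - k))
    have h2 := Nat.mul_le_mul_left (p * (p ^ k) ^ n) ih'
    have h3 := Nat.mul_le_mul_right C h1
    have h4 : p * (p ^ k) ^ n * (C + A * (p ^ (h - k)) ^ n) = p * (p ^ k) ^ n * C + p * (A * Y) := by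
      rw [hYY]; ring
    have h5 : p * (p ^ k) ^ n * ((2 * A + 1) * p ^ gExp k (h - k) * (p ^ (h - k)) ^ n) =
      (2 * A + 1) * (p * p ^ gExp k (h - k)) * Y := by rw [hYY]; ring
    rw [h4, h5] at h2
    have h6 : 2 * (A * Y) ≤ p * (A * Y) := Nat.mul_le_mul_right _ hp.two_le
    have h7 : (n + 1) * (2 * k * Y) = A * Y := by rw [hA]; ring
    omega

/-- products over prime powers -/
noncomputable def FF (F : ℕ → ℕ → ℝ) (q : ℕ) : ℝ := ∏ p ∈ q.primeFactors, F p (q.factorization p)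

lemma FF_mul (F : ℕ → ℕ → ℝ) {m n : ℕ} (h : Nat.Coprime m n) :
    FF F (m * n) = FF F m * FF F n := by
  unfold FF
  rw [Nat.Coprime.primeFactors_mul h, Finset.prod_union h.disjoint_primeFactors]
  congr 1
  · refine Finset.prod_congr rfl fun p hp => ?_
    rw [Nat.factorization_eq_of_coprime_left h (by simpa using hp)]
  · refine Finset.prod_congr rfl fun p hp => ?_
    rw [Nat.factorization_eq_of_coprime_right h (by simpa using hp)]

lemma FF_prime_pow (F : ℕ → ℕ → ℝ) {p : ℕ} (hp : p.Prime) (h : ℕ) :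
    FF F (p ^ (h + 1)) = F p (h + 1) := by
  unfold FF
  rw [Nat.primeFactors_prime_pow (by omega) hp]
  simp [hp.factorization_pow]

lemma euler_bound (F : ℕ → ℕ → ℝ) (hF0 : ∀ p h, 0 ≤ F p h) (ω : ℝ) (hω : 1 < ω) (D : ℝ)
    (hD : 0 ≤ D) (c : ℕ → ℝ) (hc0 : ∀ n, 0 ≤ c n) (hc : Summable c)
    (hF : ∀ p : ℕ, p.Prime → ∀ h, F p (h + 1) ≤ D * (p : ℝ) ^ (-ω) * c h) :
    ∃ C > (0 : ℝ), ∀ N : ℕ, ∑ q ∈ Finset.Icc 1 N, FF F q ≤ C := by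
  have hz : Summable (fun n : ℕ => (n : ℝ) ^ (-ω)) := Real.summable_nat_rpow.2 (by linarith)
  set S := ∑' n, c n with hS
  have hS0 : 0 ≤ S := tsum_nonneg hc0
  refine ⟨Real.exp (D * S * ∑' n : ℕ, (n : ℝ) ^ (-ω)), Real.exp_pos _, fun N => ?_⟩
  have hFF0 : ∀ q, 0 ≤ FF F q := fun q => Finset.prod_nonneg fun p _ => hF0 _ _
  have h1 : FF F 1 = 1 := by simp [FF]
  have hsum1 : ∀ {p : ℕ}, p.Prime → Summable (fun n : ℕ => FF F (p ^ (n + 1))) := by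
    intro p hp
    simp only [FF_prime_pow F hp]
    exact Summable.of_nonneg_of_le (fun n => hF0 _ _) (hF p hp) (hc.mul_left _)
  have hsum : ∀ {p : ℕ}, p.Prime → Summable (fun n : ℕ => ‖FF F (p ^ n)‖) := by
    intro p hp
    simp only [Real.norm_of_nonneg (hFF0 _)]
    exact (summable_nat_add_iff 1).1 (hsum1 hp)
  obtain ⟨hs1, hs2⟩ := EulerProduct.summable_and_hasSum_smoothNumbers_prod_primesBelow_tsum
    h1 (fun h => FF_mul F h) hsum (N + 1)
  have h2 : ∑ q ∈ Finset.Icc 1 N, FF F q ≤ ∏ p ∈ (N + 1).primesBelow, ∑' n : ℕ, FF F (p ^ n) := by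
    rw [← hs2.tsum_eq]
    have hmem : ∀ q ∈ Finset.Icc 1 N, q ∈ (N + 1).smoothNumbers := by
      intro q hq
      rw [Finset.mem_Icc] at hq
      exact Nat.mem_smoothNumbers_of_lt (by omega) (by omega)
    have : ∑ q ∈ Finset.Icc 1 N, FF F q = 
        ∑ q ∈ (Finset.Icc 1 N).subtype (fun q => q ∈ (N + 1).smoothNumbers), FF F q := by
      rw [Finset.sum_subtype_of_mem _ hmem]
    rw [this]
    exact hs2.summable.sum_le_tsum _ (fun i _ => hFF0 _)
  refine h2.trans ?_
  have h3 : ∏ p ∈ (N + 1).primesBelow, ∑' n : ℕ, FF F (p ^ n) ≤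
      ∏ p ∈ (N + 1).primesBelow, Real.exp (D * S * (p : ℝ) ^ (-ω)) := by
    refine Finset.prod_le_prod (fun p _ => tsum_nonneg fun n => hFF0 _) fun p hp => ?_
    have hp' := Nat.prime_of_mem_primesBelow hp
    have hs : Summable (fun n : ℕ => FF F (p ^ n)) := (summable_nat_add_iff 1).1 (hsum1 hp')
    rw [hs.tsum_eq_zero_add, pow_zero, h1, add_comm]
    refine le_trans ?_ (Real.add_one_le_exp _)
    gcongr
    calc ∑' n : ℕ, FF F (p ^ (n + 1)) ≤ ∑' n, D * (p : ℝ) ^ (-ω) * c n := by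
          refine (hsum1 hp').tsum_le_tsum (fun n => ?_) (hc.mul_left _)
          rw [FF_prime_pow F hp']
          exact hF p hp' n
      _ = D * S * (p : ℝ) ^ (-ω) := by rw [tsum_mul_left]; ring
  refine h3.trans ?_
  rw [← Real.exp_sum, ← Finset.mul_sum]
  gcongr
  exact hz.sum_le_tsum _ (fun n _ => by positivity)

lemma summable_half_div (k : ℕ) (hk : 0 < k) : Summable (fun n : ℕ => (1 / 2 : ℝ) ^ (n / k)) := by
  have hr0 : (0 : ℝ) ≤ (1 / 2 : ℝ) ^ (1 / (k : ℝ)) := by positivity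
  have hr1 : (1 / 2 : ℝ) ^ (1 / (k : ℝ)) < 1 :=
    Real.rpow_lt_one (by norm_num) (by norm_num) (by positivity)
  refine Summable.of_nonneg_of_le (fun n => by positivity) (fun n => ?_)
    ((summable_geometric_of_lt_one hr0 hr1).mul_left 2)
  have hkR : (0 : ℝ) < k := by exact_mod_cast hk
  have h1 : (n : ℝ) / k - 1 ≤ ((n / k : ℕ) : ℝ) := by
    have h2 : n < (n / k + 1) * k := by
      rw [add_mul, one_mul]; exact Nat.lt_div_mul_add hk
    have h3 : (n : ℝ) < (((n / k : ℕ) : ℝ) + 1) * k := by exact_mod_cast h2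
    rw [sub_le_iff_le_add, div_le_iff₀ hkR]
    exact h3.le
  rw [← Real.rpow_natCast, ← Real.rpow_natCast, ← Real.rpow_mul (by norm_num)]
  calc (1 / 2 : ℝ) ^ ((n / k : ℕ) : ℝ) ≤ (1 / 2 : ℝ) ^ ((n : ℝ) / k - 1) :=
        Real.rpow_le_rpow_of_exponent_ge (by norm_num) (by norm_num) h1
    _ = 2 * (1 / 2 : ℝ) ^ (1 / (k : ℝ) * n) := by
        rw [Real.rpow_sub (by norm_num), Real.rpow_one]
        rw [show (1 / (k : ℝ) * n) = (n : ℝ) / k by ring]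
        ring

lemma wkLocal_nonneg (k p e : ℕ) : 0 ≤ wkLocal k p e := by
  unfold wkLocal
  split_ifs <;> positivity

lemma local_bound (k p h : ℕ) (hk : 4 ≤ k) (hp : p.Prime) (ω : ℝ) (hω : 1 < ω) (B : ℝ) (hB : 0 ≤ B) :
    wkLocal k p (h + 1) ^ (2 * ω) * (B * (p : ℝ) ^ gExp k (h + 1)) ≤
      B * (k : ℝ) ^ (2 * ω) * (p : ℝ) ^ (-ω) * (1 / 2) ^ (h / k) := by
  have hp0 : (0 : ℝ) < p := by exact_mod_cast hp.pos
  have hp1 : (1 : ℝ) ≤ p := by exact_mod_cast hp.one_lt.le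
  have hp2 : (2 : ℝ) ≤ p := by exact_mod_cast hp.two_le
  have hk1 : (1 : ℝ) ≤ (k : ℝ) ^ (2 * ω) :=
    Real.one_le_rpow (by exact_mod_cast (by omega : 1 ≤ k)) (by linarith)
  have hhalf : ∀ u : ℕ, (p : ℝ) ^ (-(u : ℝ)) ≤ (1 / 2) ^ u := by
    intro u
    rw [Real.rpow_neg hp0.le, Real.rpow_natCast, one_div, inv_pow]
    gcongr
  set u := h / k with hu
  have hu0 : (0 : ℝ) ≤ (u : ℝ) := Nat.cast_nonneg _
  have main : (p : ℝ) ^ (-ω) * (p : ℝ) ^ (-(u : ℝ)) ≤ (p : ℝ) ^ (-ω) * (1 / 2) ^ u := by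
    gcongr; exact hhalf u
  unfold wkLocal gExp
  simp only [Nat.add_sub_cancel, ← hu]
  split_ifs with hm
  · rw [Real.mul_rpow (by positivity) (by positivity), ← Real.rpow_mul hp0.le, ← Real.rpow_natCast (p : ℝ) u]
    calc _ = B * (k : ℝ) ^ (2 * ω) * ((p : ℝ) ^ ((-(u : ℝ) - 1 / 2) * (2 * ω)) * (p : ℝ) ^ (u : ℝ)) := by ring
      _ ≤ B * (k : ℝ) ^ (2 * ω) * ((p : ℝ) ^ (-ω) * (p : ℝ) ^ (-(u : ℝ))) := by
        rw [← Real.rpow_add hp0, ← Real.rpow_add hp0]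
        refine mul_le_mul (mul_le_mul_of_nonneg_left (by linarith) hB)
          (Real.rpow_le_rpow_of_exponent_le hp1 (by nlinarith)) (by positivity) (by positivity)
      _ ≤ B * (k : ℝ) ^ (2 * ω) * ((p : ℝ) ^ (-ω) * (1 / 2) ^ u) := by gcongr
      _ = _ := by ring
  · rw [← Real.rpow_mul hp0.le, ← Real.rpow_natCast (p : ℝ) (u + 1)]
    push_cast
    calc _ = B * 1 * ((p : ℝ) ^ ((-(u : ℝ) - 1) * (2 * ω)) * (p : ℝ) ^ ((u : ℝ) + 1)) := by ring
      _ ≤ B * (k : ℝ) ^ (2 * ω) * ((p : ℝ) ^ (-ω) * (p : ℝ) ^ (-(u : ℝ))) := by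
        rw [← Real.rpow_add hp0, ← Real.rpow_add hp0]
        refine mul_le_mul (mul_le_mul_of_nonneg_left (by linarith) hB)
          (Real.rpow_le_rpow_of_exponent_le hp1 (by nlinarith)) (by positivity) (by positivity)
      _ ≤ B * (k : ℝ) ^ (2 * ω) * ((p : ℝ) ^ (-ω) * (1 / 2) ^ u) := by gcongr
      _ = _ := by ring

lemma cnt_general {ι : Type} [Fintype ι] (ε : ι → ℤ) (hε : ∀ i, ε i = 1 ∨ ε i = -1)
    (k : ℕ) (hk : 4 ≤ k) (hn : k ≤ Fintype.card ι + 1) (q : ℕ) (hq : 0 < q) :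
    (Cnt ε k q q : ℝ) ≤ (q : ℝ) ^ (Fintype.card ι - 1) *
      FF (fun p h => ((2 * (2 * k * Fintype.card ι) + 1 : ℕ) : ℝ) * (p : ℝ) ^ gExp k h) q := by
  induction q using Nat.recOnPosPrimePosCoprime with
  | zero => omega
  | one =>
    have : Cnt ε k 1 1 ≤ 1 := by
      unfold Cnt
      refine (Finset.card_filter_le _ _).trans ?_
      simp [Fintype.card_piFinset]
    simp only [Nat.cast_one, one_pow, FF, Nat.primeFactors_one, Finset.prod_empty, mul_one]
    exact_mod_cast this
  | prime_pow p h hp hh =>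
    obtain ⟨l, rfl⟩ : ∃ l, h = l + 1 := ⟨h - 1, by omega⟩
    rw [FF_prime_pow _ hp]
    have := (Nat.le_add_right _ _).trans (cnt_prime_pow ε hε k p hk hn hp (l + 1) hh)
    have h2 : (Cnt ε k (p ^ (l + 1)) (p ^ (l + 1)) : ℝ) ≤ _ := Nat.cast_le.2 this
    refine h2.trans (le_of_eq ?_)
    push_cast; ring
  | coprime a b ha hb hab iha ihb =>
    have h1 := iha (by omega)
    have h2 := ihb (by omega)
    have h3 : (Cnt ε k (a * b) (a * b) : ℝ) ≤ Cnt ε k a a * Cnt ε k b b := by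
      exact_mod_cast cnt_coprime ε k a b (by omega) (by omega) hab
    rw [FF_mul _ hab]
    refine h3.trans ((mul_le_mul h1 h2 (Nat.cast_nonneg _) ((Nat.cast_nonneg _).trans h1)).trans
      (le_of_eq ?_))
    push_cast; ring

lemma series_bound {ι : Type} [Fintype ι] (ε : ι → ℤ) (hε : ∀ i, ε i = 1 ∨ ε i = -1)
    (k : ℕ) (hk : 4 ≤ k) (hn : k ≤ Fintype.card ι + 1) (ω : ℝ) (hω : 1 < ω) :
    ∃ C > (0 : ℝ), ∀ N : ℕ, ∑ q ∈ Finset.Icc 1 N,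
      wk k q ^ (2 * ω) * ((Cnt ε k q q : ℝ) / (q : ℝ) ^ (Fintype.card ι - 1)) ≤ C := by
  set B : ℝ := ((2 * (2 * k * Fintype.card ι) + 1 : ℕ) : ℝ) with hB
  have hB0 : 0 ≤ B := Nat.cast_nonneg _
  obtain ⟨C, hC, h⟩ := euler_bound
    (fun p h => wkLocal k p h ^ (2 * ω) * (B * (p : ℝ) ^ gExp k h))
    (fun p h => mul_nonneg (Real.rpow_nonneg (wkLocal_nonneg _ _ _) _) (by positivity))
    ω hω (B * (k : ℝ) ^ (2 * ω)) (by positivity) (fun n => (1 / 2) ^ (n / k)) (fun n => by positivity)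
    (summable_half_div k (by omega)) (fun p hp h => local_bound k p h hk hp ω hω B hB0)
  refine ⟨C, hC, fun N => le_trans (Finset.sum_le_sum fun q hq => ?_) (h N)⟩
  rw [Finset.mem_Icc] at hq
  have hq0 : (0 : ℝ) < q := by exact_mod_cast hq.1
  have h1 := cnt_general ε hε k hk hn q hq.1
  unfold FF at h1 ⊢
  rw [Finset.prod_mul_distrib, Real.finsetProd_rpow _ _ (fun p _ => wkLocal_nonneg _ _ _)]
  refine mul_le_mul_of_nonneg_left ?_ (Real.rpow_nonneg
    (Finset.prod_nonneg fun p _ => wkLocal_nonneg _ _ _) _)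
  rw [div_le_iff₀ (by positivity), mul_comm]
  exact h1

lemma eC_add (a b : ℝ) : eC (a + b) = eC a * eC b := by
  unfold eC
  rw [← Complex.exp_add]; push_cast; ring_nf

lemma eC_int (n : ℤ) : eC n = 1 := by
  unfold eC
  rw [Complex.exp_eq_one_iff]
  exact ⟨n, by push_cast; ring⟩

lemma eC_norm (a : ℝ) : ‖eC a‖ = 1 := by
  unfold eC
  rw [show (2 * Real.pi * Complex.I * a : ℂ) = ((2 * Real.pi * a : ℝ) : ℂ) * Complex.I by
    push_cast; ring]
  exact Complex.norm_exp_ofReal_mul_I _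

lemma eC_conj (a : ℝ) : (starRingEnd ℂ) (eC a) = eC (-a) := by
  unfold eC
  rw [← Complex.exp_conj]
  have h2 : (starRingEnd ℂ) 2 = 2 := Complex.conj_ofNat 2
  simp [h2]

lemma eC_nat_mul (n : ℕ) (a : ℝ) : eC (n * a) = eC a ^ n := by
  unfold eC
  rw [← Complex.exp_nat_mul]; push_cast; ring_nf

lemma eC_sum {ι : Type} (s : Finset ι) (f : ι → ℝ) : eC (∑ i ∈ s, f i) = ∏ i ∈ s, eC (f i) := by
  unfold eC
  rw [← Complex.exp_sum]; push_cast; rw [Finset.mul_sum]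

lemma eC_eq_one {a : ℝ} (h : eC a = 1) : ∃ n : ℤ, a = n := by
  unfold eC at h
  rw [Complex.exp_eq_one_iff] at h
  obtain ⟨n, hn⟩ := h
  refine ⟨n, ?_⟩
  have h2 : (2 * Real.pi * Complex.I : ℂ) ≠ 0 := Complex.two_pi_I_ne_zero
  have h3 : (2 * Real.pi * Complex.I : ℂ) * a = (2 * Real.pi * Complex.I : ℂ) * n := by
    rw [hn]; ring
  exact_mod_cast mul_left_cancel₀ h2 h3

lemma eC_continuous : Continuous eC := by
  unfold eC; fun_prop

lemma geom_bound (q : ℕ) (hq : 0 < q) (h : ℤ) :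
    ‖∑ a ∈ Finset.range (2 * q), eC ((a : ℝ) / q * h)‖ ≤ if (q : ℤ) ∣ h then 2 * (q : ℝ) else 0 := by
  have hq0 : (q : ℝ) ≠ 0 := by positivity
  split_ifs with hd
  · refine (norm_sum_le _ _).trans ?_
    simp [eC_norm]
  · have h1 : ∀ a : ℕ, eC ((a : ℝ) / q * h) = eC ((h : ℝ) / q) ^ a := by
      intro a
      rw [← eC_nat_mul]; congr 1; ring
    simp only [h1]
    have hne : eC ((h : ℝ) / q) ≠ 1 := by
      intro he
      obtain ⟨n, hn⟩ := eC_eq_one he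
      apply hd
      rw [div_eq_iff hq0] at hn
      exact ⟨n, by rw [mul_comm]; exact_mod_cast hn⟩
    rw [geom_sum_eq hne, ← eC_nat_mul]
    have h2 : ((2 * q : ℕ) : ℝ) * ((h : ℝ) / q) = ((2 * h : ℤ) : ℝ) := by
      push_cast; field_simp
    rw [h2, eC_int]; simp

/-- signs -/
def sgn (s : ℕ) : Fin s ⊕ Fin s → ℤ := Sum.elim (fun _ => 1) (fun _ => -1)

lemma sgn_pm (s : ℕ) (i : Fin s ⊕ Fin s) : sgn s i = 1 ∨ sgn s i = -1 := by
  cases i <;> simp [sgn]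

lemma norm_expand (s k : ℕ) (A : Finset ℤ) (α : ℝ) :
    ((‖∑ x ∈ A, eC (α * (x : ℝ) ^ k)‖ ^ (2 * s) : ℝ) : ℂ) =
      ∑ x ∈ Fintype.piFinset (fun _ : Fin s ⊕ Fin s => A),
        eC (α * ((∑ i, sgn s i * x i ^ k : ℤ) : ℝ)) := by
  have h1 : ∀ x : Fin s ⊕ Fin s → ℤ, eC (α * ((∑ i, sgn s i * x i ^ k : ℤ) : ℝ)) =
      ∏ i, eC (α * (sgn s i * (x i : ℝ) ^ k)) := by
    intro x
    rw [← eC_sum, ← Finset.mul_sum]; push_cast; rfl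
  simp only [h1]
  rw [← Finset.prod_univ_sum (fun _ => A) (fun i (x : ℤ) => eC (α * (sgn s i * (x : ℝ) ^ k)))]
  rw [Fintype.prod_sum_type]
  simp only [sgn, Sum.elim_inl, Sum.elim_inr, Finset.prod_const, Finset.card_univ, Fintype.card_fin]
  have h2 : ∑ x ∈ A, eC (α * (((-1 : ℤ) : ℝ) * (x : ℝ) ^ k)) =
      (starRingEnd ℂ) (∑ x ∈ A, eC (α * (x : ℝ) ^ k)) := by
    rw [map_sum]
    refine Finset.sum_congr rfl fun x _ => ?_
    rw [eC_conj]; congr 1; push_cast; ring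
  rw [h2]
  simp only [Int.cast_one, one_mul]
  rw [← mul_pow, Complex.mul_conj', ← pow_mul]
  push_cast; rfl

lemma count_transfer (s k q m : ℕ) (A : Finset ℤ)
    (hA : ∀ x ∈ A, 1 ≤ x ∧ x < (m * q : ℕ)) :
    ((Fintype.piFinset (fun _ : Fin s ⊕ Fin s => A)).filter
      (fun x => (q : ℤ) ∣ ∑ i, sgn s i * x i ^ k)).card ≤ Cnt (sgn s) k (m * q) q := by
  unfold Cnt
  refine Finset.card_le_card_of_injOn (fun x i => (x i).toNat) ?_ ?_
  · intro x hx
    simp only [Finset.coe_filter, Fintype.mem_piFinset, Finset.mem_range, Set.mem_ofPred_eq] at hx ⊢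
    refine ⟨fun i => ?_, ?_⟩
    · have := hA _ (hx.1 i); omega
    · convert hx.2 using 4 with i
      have := hA _ (hx.1 i)
      simp; omega
  · intro x hx y hy hxy
    simp only [Finset.coe_filter, Fintype.mem_piFinset, Set.mem_ofPred_eq] at hx hy
    funext i
    have h1 := hA _ (hx.1 i)
    have h2 := hA _ (hy.1 i)
    have h3 : (x i).toNat = (y i).toNat := congrFun hxy i
    omega

lemma pointwise_bound (s k q : ℕ) (hs : 0 < s) (hq : 0 < q) (P : ℝ) (hP : 2 ≤ P) (hqP : (q : ℝ) ≤ P)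
    (A : Finset ℤ) (hA : A ⊆ Finset.Icc 1 ⌊P⌋) (β : ℝ) :
    ∑ a ∈ Finset.range (2 * q), ‖∑ x ∈ A, eC ((β + (a : ℝ) / q) * (x : ℝ) ^ k)‖ ^ (2 * s) ≤
      2 * (2 * P) ^ (2 * s) * ((Cnt (sgn s) k q q : ℝ) / (q : ℝ) ^ (2 * s - 1)) := by
  have hq0 : (0 : ℝ) < q := by exact_mod_cast hq
  set m := ⌊P⌋₊ / q + 1 with hm
  have hP0 : (0 : ℝ) ≤ P := by linarith
  have hA' : ∀ x ∈ A, 1 ≤ x ∧ x < (m * q : ℕ) := by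
    intro x hx
    have h1 := Finset.mem_Icc.1 (hA hx)
    refine ⟨h1.1, lt_of_le_of_lt h1.2 ?_⟩
    rw [← Int.natCast_floor_eq_floor hP0]
    have : ⌊P⌋₊ < m * q := by
      rw [hm, add_mul, one_mul]; exact Nat.lt_div_mul_add hq
    exact_mod_cast this
  have hmq : (m : ℝ) ≤ 2 * P / q := by
    rw [le_div_iff₀ hq0, hm]
    push_cast
    have h1 : ((⌊P⌋₊ / q : ℕ) : ℝ) * q ≤ ⌊P⌋₊ := by exact_mod_cast Nat.div_mul_le_self _ _
    have h2 := Nat.floor_le hP0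
    linarith
  have hcard : Fintype.card (Fin s ⊕ Fin s) = 2 * s := by simp; omega
  set X := Fintype.piFinset (fun _ : Fin s ⊕ Fin s => A) with hX
  set H : (Fin s ⊕ Fin s → ℤ) → ℤ := fun x => ∑ i, sgn s i * x i ^ k with hH
  have e1 : ((∑ a ∈ Finset.range (2 * q),
      ‖∑ x ∈ A, eC ((β + (a : ℝ) / q) * (x : ℝ) ^ k)‖ ^ (2 * s) : ℝ) : ℂ) =
      ∑ x ∈ X, eC (β * H x) * ∑ a ∈ Finset.range (2 * q), eC ((a : ℝ) / q * H x) := by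
    rw [Complex.ofReal_sum]
    simp only [norm_expand]
    rw [Finset.sum_comm]
    refine Finset.sum_congr rfl fun x _ => ?_
    rw [Finset.mul_sum]
    refine Finset.sum_congr rfl fun a _ => ?_
    rw [← eC_add, add_mul]
  have e2 : ∑ a ∈ Finset.range (2 * q), ‖∑ x ∈ A, eC ((β + (a : ℝ) / q) * (x : ℝ) ^ k)‖ ^ (2 * s)
      ≤ ∑ x ∈ X, if (q : ℤ) ∣ H x then 2 * (q : ℝ) else 0 := by
    have h0 : 0 ≤ ∑ a ∈ Finset.range (2 * q),
      ‖∑ x ∈ A, eC ((β + (a : ℝ) / q) * (x : ℝ) ^ k)‖ ^ (2 * s) :=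
      Finset.sum_nonneg fun _ _ => by positivity
    rw [← Complex.norm_of_nonneg h0, e1]
    refine (norm_sum_le _ _).trans (Finset.sum_le_sum fun x _ => ?_)
    rw [norm_mul, eC_norm, one_mul]
    exact geom_bound q hq _
  refine e2.trans ?_
  rw [← Finset.sum_filter, Finset.sum_const, nsmul_eq_mul]
  have h3 : ((X.filter (fun x => (q : ℤ) ∣ H x)).card : ℝ) ≤ (m : ℝ) ^ (2 * s) * Cnt (sgn s) k q q := by
    have h4 := (count_transfer s k q m A hA').trans (cnt_mul (sgn s) k m q hq)
    rw [hcard] at h4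
    exact_mod_cast h4
  calc _ ≤ ((m : ℝ) ^ (2 * s) * Cnt (sgn s) k q q) * (2 * (q : ℝ)) := by gcongr
    _ ≤ ((2 * P / q) ^ (2 * s) * Cnt (sgn s) k q q) * (2 * (q : ℝ)) := by gcongr
    _ = _ := by
      obtain ⟨l, hl⟩ : ∃ l, 2 * s = l + 1 := ⟨2 * s - 1, by omega⟩
      rw [hl, Nat.add_sub_cancel, div_pow]
      field_simp
      ring

lemma kset_meas (k : ℕ) (P : ℝ) : MeasurableSet (Kset k P) := by
  have : Kset k P = Set.Ico (0 : ℝ) 1 ∩ ⋃ a : ℕ, ⋃ q : ℕ, ⋃ _ : a ≤ q ∧ (q : ℝ) ≤ P ∧ Nat.Coprime a q,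
      {α : ℝ | |(q : ℝ) * α - (a : ℝ)| ≤ P ^ ((1 : ℝ) - (k : ℝ))} := by
    ext α
    simp only [Kset, Set.mem_ofPred_eq, Set.mem_inter_iff, Set.mem_iUnion]
    constructor
    · rintro ⟨h, a, q, h1, h2, h3, h4⟩
      exact ⟨h, a, q, ⟨h1, h2, h3⟩, h4⟩
    · rintro ⟨h, a, q, ⟨h1, h2, h3⟩, h4⟩
      exact ⟨h, a, q, h1, h2, h3, h4⟩
  rw [this]
  refine measurableSet_Ico.inter (MeasurableSet.iUnion fun a => MeasurableSet.iUnion fun q =>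
    MeasurableSet.iUnion fun _ => ?_)
  exact measurableSet_le (by fun_prop) measurable_const

lemma phi_int (ω : ℝ) (hω : 1 < ω) (c : ℝ) (hc : 0 < c) :
    Integrable (fun β : ℝ => (1 + c * |β|) ^ (-ω)) ∧
    ∫ β : ℝ, (1 + c * |β|) ^ (-ω) = c⁻¹ * ∫ β : ℝ, (1 + |β|) ^ (-ω) := by
  have h1 : Integrable (fun β : ℝ => (1 + |β|) ^ (-ω)) := by
    have := integrable_one_add_norm (E := ℝ) (μ := volume) (r := ω) (by simpa using hω)
    simpa using this
  have e : (fun β : ℝ => (1 + c * |β|) ^ (-ω)) = fun β => (fun x : ℝ => (1 + |x|) ^ (-ω)) (c * β) := by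
    funext β
    simp only [abs_mul, abs_of_pos hc]
  rw [e]
  refine ⟨h1.comp_mul_left' hc.ne', ?_⟩
  rw [Measure.integral_comp_mul_left (fun x : ℝ => (1 + |x|) ^ (-ω)) c, abs_of_pos (inv_pos.2 hc), smul_eq_mul]

theorem stmt16 (k : ℕ) (hk : 4 ≤ k) (ω : ℝ) (hω : 1 < ω) (t : ℝ)
    (ht : ((k / 2 : ℕ) : ℝ) ≤ t) :
    ∃ C > (0 : ℝ), ∀ P : ℝ, 2 ≤ P → ∀ 𝒜 : Finset ℤ, 𝒜 ⊆ Finset.Icc 1 ⌊P⌋ →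
      ∀ Υ : ℝ → ℝ,
        (∀ a q : ℕ, a ≤ q → (q : ℝ) ≤ P → Nat.Coprime a q →
          ∀ α ∈ Set.Ico (0 : ℝ) 1, |(q : ℝ) * α - (a : ℝ)| ≤ P ^ ((1 : ℝ) - (k : ℝ)) →
            Υ α = wk k q ^ (2 * ω) * (1 + P ^ (k : ℕ) * |α - (a : ℝ) / (q : ℝ)|) ^ (-ω)) →
        (∫ α in Kset k P, Υ α * ‖∑ x ∈ 𝒜, eC (α * (x : ℝ) ^ k)‖ ^ (2 * t))
          ≤ C * P ^ (2 * t - (k : ℝ)) := by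
  set s := k / 2 with hs
  have hcard : Fintype.card (Fin s ⊕ Fin s) = 2 * s := by simp; omega
  obtain ⟨C0, hC0, hser⟩ := series_bound (sgn s) (sgn_pm s) k hk (by rw [hcard]; omega) ω hω
  rw [hcard] at hser
  set I := ∫ β : ℝ, (1 + |β|) ^ (-ω) with hI
  have hI0 : 0 ≤ I := integral_nonneg fun β => by positivity
  refine ⟨2 * 2 ^ (2 * s) * I * C0 + 1, by positivity, ?_⟩
  intro P hP 𝒜 hA Υ hΥ
  have hP0 : (0 : ℝ) < P := by linarith
  have hPk : (0 : ℝ) < P ^ k := by positivity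
  obtain ⟨hφi, hφ⟩ := phi_int ω hω (P ^ k) hPk
  set φ : ℝ → ℝ := fun β => (1 + P ^ k * |β|) ^ (-ω) with hφd
  have hφ0 : ∀ β, 0 ≤ φ β := fun β => by simp only [hφd]; positivity
  set S : ℝ → ℝ := fun α => ‖∑ x ∈ 𝒜, eC (α * (x : ℝ) ^ k)‖ with hSd
  have hS0 : ∀ α, 0 ≤ S α := fun α => norm_nonneg _
  have hSP : ∀ α, S α ≤ P := by
    intro α
    refine (norm_sum_le _ _).trans ?_
    simp only [eC_norm, Finset.sum_const, nsmul_eq_mul, mul_one]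
    have h1 := Finset.card_le_card hA
    rw [Int.card_Icc, ← Int.natCast_floor_eq_floor hP0.le] at h1
    have h2 : 𝒜.card ≤ ⌊P⌋₊ := by omega
    exact (Nat.cast_le.2 h2).trans (Nat.floor_le hP0.le)
  have hSc : Continuous S := by
    have := eC_continuous
    simp only [hSd]; fun_prop
  have hSt : ∀ α, S α ^ (2 * t) ≤ P ^ (2 * t - 2 * s) * S α ^ (2 * s) := by
    intro α
    have h1 : 2 * t = (2 * t - 2 * s) + ((2 * s : ℕ) : ℝ) := by push_cast; ring
    have h2 : 0 ≤ 2 * t - 2 * s := by linarith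
    conv_lhs => rw [h1]
    rw [Real.rpow_add_of_nonneg (hS0 α) h2 (Nat.cast_nonneg _), Real.rpow_natCast]
    gcongr
    exact hSP α
  have hw0 : ∀ q, 0 ≤ wk k q ^ (2 * ω) := fun q =>
    Real.rpow_nonneg (Finset.prod_nonneg fun p _ => wkLocal_nonneg _ _ _) _
  -- the individual terms
  have hterm : ∀ c : ℝ, Integrable (fun α => φ (α - c) * S α ^ (2 * s)) := by
    intro c
    refine Integrable.mul_bdd (c := P ^ (2 * s)) (hφi.comp_sub_right c)
      (hSc.pow _).aestronglyMeasurable (Filter.Eventually.of_forall fun α => ?_)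
    rw [Real.norm_of_nonneg (pow_nonneg (hS0 α) _)]
    gcongr
    exact hSP α
  have hterm2 : ∀ c : ℝ, ∫ α, φ (α - c) * S α ^ (2 * s) = ∫ β, φ β * S (β + c) ^ (2 * s) := by
    intro c
    rw [← integral_sub_right_eq_self (fun β => φ β * S (β + c) ^ (2 * s)) c]
    simp
  have hterm3 : ∀ c : ℝ, Integrable (fun β => φ β * S (β + c) ^ (2 * s)) := by
    intro c
    have := (hterm c).comp_add_right c
    simpa using this
  set g : ℝ → ℝ := fun α => P ^ (2 * t - 2 * s) * ∑ q ∈ Finset.Icc 1 ⌊P⌋₊, wk k q ^ (2 * ω) *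
    ∑ a ∈ Finset.range (2 * q), φ (α - (a : ℝ) / q) * S α ^ (2 * s) with hg
  have hg0 : ∀ α, 0 ≤ g α := fun α => mul_nonneg (by positivity) (Finset.sum_nonneg fun q _ =>
    mul_nonneg (hw0 q) (Finset.sum_nonneg fun a _ => mul_nonneg (hφ0 _) (pow_nonneg (hS0 _) _)))
  have hgi : Integrable g := by
    refine Integrable.const_mul (integrable_finsetSum _ fun q _ => Integrable.const_mul
      (integrable_finsetSum _ fun a _ => hterm _) _) _
  have hle : ∀ α ∈ Kset k P, 0 ≤ Υ α * S α ^ (2 * t) ∧ Υ α * S α ^ (2 * t) ≤ g α := by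
    rintro α ⟨hα, a, q, haq, hqP, hcop, hab⟩
    rw [hΥ a q haq hqP hcop α hα hab]
    have hq0 : 0 < q := by
      rcases Nat.eq_zero_or_pos q with h | h
      · subst h
        have : a = 0 := by omega
        subst this
        simp at hcop
      · exact h
    refine ⟨mul_nonneg (mul_nonneg (hw0 q) (hφ0 _)) (Real.rpow_nonneg (hS0 _) _), ?_⟩
    have h1 : wk k q ^ (2 * ω) * ∑ a ∈ Finset.range (2 * q), φ (α - (a : ℝ) / q) * S α ^ (2 * s)
        ≤ ∑ q ∈ Finset.Icc 1 ⌊P⌋₊, wk k q ^ (2 * ω) *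
          ∑ a ∈ Finset.range (2 * q), φ (α - (a : ℝ) / q) * S α ^ (2 * s) :=
      Finset.single_le_sum (f := fun q : ℕ => wk k q ^ (2 * ω) *
          ∑ a ∈ Finset.range (2 * q), φ (α - (a : ℝ) / q) * S α ^ (2 * s)) (fun q _ =>
        mul_nonneg (hw0 q) (Finset.sum_nonneg fun a _ => mul_nonneg (hφ0 _) (pow_nonneg (hS0 _) _)))
        (Finset.mem_Icc.2 ⟨hq0, Nat.le_floor hqP⟩)
    have h2 : φ (α - (a : ℝ) / q) * S α ^ (2 * s) ≤
        ∑ a ∈ Finset.range (2 * q), φ (α - (a : ℝ) / q) * S α ^ (2 * s) :=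
      Finset.single_le_sum (f := fun a : ℕ => φ (α - (a : ℝ) / q) * S α ^ (2 * s))
        (fun a _ => mul_nonneg (hφ0 _) (pow_nonneg (hS0 _) _))
        (Finset.mem_range.2 (by omega))
    calc _ ≤ (wk k q ^ (2 * ω) * φ (α - (a : ℝ) / q)) * (P ^ (2 * t - 2 * s) * S α ^ (2 * s)) :=
          mul_le_mul_of_nonneg_left (hSt α) (mul_nonneg (hw0 q) (hφ0 _))
      _ = P ^ (2 * t - 2 * s) * (wk k q ^ (2 * ω) * (φ (α - (a : ℝ) / q) * S α ^ (2 * s))) := by ring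
      _ ≤ g α := by
          refine mul_le_mul_of_nonneg_left ?_ (by positivity)
          exact (mul_le_mul_of_nonneg_left h2 (hw0 q)).trans h1
  have step1 : (∫ α in Kset k P, Υ α * S α ^ (2 * t)) ≤ ∫ α, g α := by
    refine le_trans (integral_mono_of_nonneg ?_ hgi.integrableOn ?_)
      (setIntegral_le_integral hgi (Filter.Eventually.of_forall hg0))
    · filter_upwards [ae_restrict_mem (kset_meas k P)] with α hα using (hle α hα).1
    · filter_upwards [ae_restrict_mem (kset_meas k P)] with α hα using (hle α hα).2
  have step2 : ∫ α, g α ≤ P ^ (2 * t - 2 * s) * ∑ q ∈ Finset.Icc 1 ⌊P⌋₊, wk k q ^ (2 * ω) *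
      ((2 * (2 * P) ^ (2 * s) * ((Cnt (sgn s) k q q : ℝ) / (q : ℝ) ^ (2 * s - 1))) *
        ((P ^ k)⁻¹ * I)) := by
    simp only [hg]
    rw [integral_const_mul, integral_finsetSum _ (fun q _ => Integrable.const_mul
      (integrable_finsetSum _ fun a _ => hterm _) _)]
    refine mul_le_mul_of_nonneg_left (Finset.sum_le_sum fun q hq => ?_) (by positivity)
    rw [integral_const_mul]
    refine mul_le_mul_of_nonneg_left ?_ (hw0 q)
    rw [Finset.mem_Icc] at hq
    have hqP : (q : ℝ) ≤ P := (Nat.cast_le.2 hq.2).trans (Nat.floor_le hP0.le)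
    rw [integral_finsetSum _ (fun a _ => hterm _)]
    simp only [hterm2]
    rw [← integral_finsetSum _ (fun a _ => hterm3 _), ← hφ, ← integral_const_mul]
    refine integral_mono (integrable_finsetSum _ fun a _ => hterm3 _) (hφi.const_mul _) fun β => ?_
    simp only
    rw [← Finset.mul_sum, mul_comm]
    refine mul_le_mul_of_nonneg_right ?_ (hφ0 β)
    exact pointwise_bound s k q (by omega) hq.1 P hP hqP 𝒜 hA β
  refine step1.trans (step2.trans ?_)
  have hPe : P ^ (2 * t - 2 * s) * P ^ (2 * s) * (P ^ k)⁻¹ = P ^ (2 * t - (k : ℝ)) := by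
    rw [← Real.rpow_natCast P (2 * s), ← Real.rpow_natCast P k, ← Real.rpow_neg hP0.le,
      ← Real.rpow_add hP0, ← Real.rpow_add hP0]
    congr 1; push_cast; ring
  calc _ = (P ^ (2 * t - 2 * s) * P ^ (2 * s) * (P ^ k)⁻¹) * (2 * 2 ^ (2 * s) * I) *
        ∑ q ∈ Finset.Icc 1 ⌊P⌋₊, wk k q ^ (2 * ω) *
          ((Cnt (sgn s) k q q : ℝ) / (q : ℝ) ^ (2 * s - 1)) := by
        rw [Finset.mul_sum, Finset.mul_sum]
        refine Finset.sum_congr rfl fun q _ => ?_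
        rw [mul_pow]; ring
    _ ≤ (P ^ (2 * t - 2 * s) * P ^ (2 * s) * (P ^ k)⁻¹) * (2 * 2 ^ (2 * s) * I) * C0 := by
        refine mul_le_mul_of_nonneg_left (hser _) (by positivity)
    _ = (2 * 2 ^ (2 * s) * I * C0) * P ^ (2 * t - (k : ℝ)) := by rw [hPe]; ring
    _ ≤ _ := by
        refine mul_le_mul_of_nonneg_right (by linarith) (by positivity)
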